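/- Let Λ be a unimodular lattice in ℝ^d (d ≥ 2) and Λ* its dual. Then ω(Λ) = 0 if and only if ω(Λ*) = 0. Moreover, for every real γ > 0, if ω(Λ*) ≥ γ then ω(Λ) ≥ γ/((d−1)²(1+γ) − γ); in particular, if ω(Λ) and ω(Λ*) are both finite and nonzero, then 1 + ω(Λ)^{−1} ≤ (d−1)²(1 + ω(Λ*)^{−1}). -/

import Mathlib

open Filter

noncomputable section

/-- A unimodular lattice in `ℝ^d`: the set of integer linear combinations of a basis of `ℝ^d`
whose matrix has determinant `±1`. -/
def IsUnimodularLattice (d : ℕ) (Λ : Set (Fin d → ℝ)) : Prop :=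
  ∃ B : Matrix (Fin d) (Fin d) ℝ, |B.det| = 1 ∧
    Λ = {v | ∃ x : Fin d → ℤ, v = B.mulVec fun i => (x i : ℝ)}

/-- The dual lattice `Λ* = {w : ⟨w, z⟩ ∈ ℤ for all z ∈ Λ}`. -/
def dualLattice (d : ℕ) (Λ : Set (Fin d → ℝ)) : Set (Fin d → ℝ) :=
  {w | ∀ z ∈ Λ, ∃ c : ℤ, ∑ i, w i * z i = (c : ℝ)}

/-- `Π(z) = ∏ i, |z_i|^(1/d)`. -/
def PiProd (d : ℕ) (z : Fin d → ℝ) : ℝ := ∏ i, |z i| ^ ((1 : ℝ) / d)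

/-- The supremum norm `|z| = max_i |z_i|`. -/
def supNorm {d : ℕ} (z : Fin d → ℝ) : ℝ := ⨆ i, |z i|

/-- The Diophantine exponent of a lattice:
`ω(Λ) = sup {γ ∈ ℝ : Π(z) ≤ |z|^(−γ) for infinitely many z ∈ Λ}`, a supremum in `[−∞, +∞]`. -/
def omegaLat (d : ℕ) (Λ : Set (Fin d → ℝ)) : EReal :=
  sSup (Real.toEReal '' {γ : ℝ | {z ∈ Λ | PiProd d z ≤ supNorm z ^ (-γ)}.Infinite})

/-- Integer combinations of the columns of `B`. -/
def latOf {d : ℕ} (B : Matrix (Fin d) (Fin d) ℝ) : Set (Fin d → ℝ) :=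
  {v | ∃ x : Fin d → ℤ, v = B.mulVec fun i => (x i : ℝ)}

/-- Minkowski's theorem on linear forms. -/
lemma minkowski_forms {d : ℕ} (A : Matrix (Fin d) (Fin d) ℝ) (hA : A.det ≠ 0) (c : Fin d → ℝ)
    (hc : ∀ i, 0 < c i) (h : |A.det| < ∏ i, c i) :
    ∃ x : Fin d → ℤ, x ≠ 0 ∧ ∀ i, |(A.mulVec (fun i => (x i : ℝ))) i| < c i := by
  classical
  have hli : LinearIndependent ℝ A.col :=
    Matrix.linearIndependent_cols_of_det_ne_zero hA
  let b : Module.Basis (Fin d) ℝ (Fin d → ℝ) :=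
    basisOfLinearIndependentOfCardEqFinrank' A.col hli (by simp)
  have hb : ⇑b = A.col := coe_basisOfLinearIndependentOfCardEqFinrank' _ _ _
  have hdet : (Matrix.of b).det = A.det := by
    rw [hb, ← Matrix.det_transpose A]; rfl
  have hfund := ZSpan.isAddFundamentalDomain' b MeasureTheory.volume
  let s : Set (Fin d → ℝ) := Set.pi Set.univ fun i => Set.Ioo (-c i) (c i)
  have hvol : MeasureTheory.volume (ZSpan.fundamentalDomain b) * 2 ^ Module.finrank ℝ (Fin d → ℝ)
      < MeasureTheory.volume s := by
    rw [ZSpan.volume_fundamentalDomain, hdet, Real.volume_pi_Ioo, ← ENNReal.ofReal_prod_of_nonneg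
      (fun i _ => by linarith [hc i])]
    have h2 : ∏ i, (c i - -c i) = (∏ i, c i) * 2 ^ d := by
      rw [show (fun i => c i - -c i) = fun i => c i * 2 by ext; ring, Finset.prod_mul_distrib]
      simp
    rw [h2, ENNReal.ofReal_mul (Finset.prod_nonneg fun i _ => (hc i).le),
      ENNReal.ofReal_pow (by norm_num)]
    simp only [Module.finrank_fintype_fun_eq_card, Fintype.card_fin, ENNReal.ofReal_ofNat]
    refine ENNReal.mul_lt_mul_left (by simp) (by finiteness) ?_
    exact (ENNReal.ofReal_lt_ofReal_iff (lt_of_le_of_lt (abs_nonneg _) h)).2 h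
  have hcount : Countable (Submodule.span ℤ (Set.range b)).toAddSubgroup := by
    change Countable (Submodule.span ℤ (Set.range b))
    infer_instance
  obtain ⟨x, hx0, hxs⟩ :=
    MeasureTheory.exists_ne_zero_mem_lattice_of_measure_mul_two_pow_lt_measure hfund
      (s := s) (by
        intro x hx i hi
        have := hx i hi
        simp only [Set.mem_Ioo, Pi.neg_apply] at this ⊢
        constructor <;> linarith) (convex_pi fun i _ => convex_Ioo _ _) hvol
  obtain ⟨y, hy⟩ := (Submodule.mem_span_range_iff_exists_fun ℤ).1 x.2
  have hy' : A.mulVec (fun i => (y i : ℝ)) = (x : Fin d → ℝ) := by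
    rw [← hy, hb]
    ext i
    simp [Matrix.mulVec, dotProduct, Finset.sum_apply, Matrix.col, mul_comm]
  refine ⟨y, ?_, ?_⟩
  · rintro rfl
    apply hx0
    ext i
    rw [← hy']
    simp [Matrix.mulVec, dotProduct]
  · intro i
    rw [hy', abs_lt]
    exact hxs i trivial

lemma latOf_ne_zero {d : ℕ} (B : Matrix (Fin d) (Fin d) ℝ) (hB : |B.det| = 1)
    (x : Fin d → ℤ) (hx : x ≠ 0) : B.mulVec (fun i => (x i : ℝ)) ≠ 0 := by
  intro h
  have hdet : B.det ≠ 0 := by intro h; rw [h] at hB; simp at hB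
  have := Matrix.eq_zero_of_mulVec_eq_zero hdet h
  apply hx
  ext i
  have := congrFun this i
  simpa using this

lemma latOf_finite {d : ℕ} (B : Matrix (Fin d) (Fin d) ℝ) (hB : |B.det| = 1) (R : ℝ) :
    {z ∈ latOf B | ∀ i, |z i| ≤ R}.Finite := by
  have hu : IsUnit B.det := by
    rw [isUnit_iff_ne_zero]; intro h; rw [h] at hB; simp at hB
  have hsub : {z ∈ latOf B | ∀ i, |z i| ≤ R} ⊆
      (fun x : Fin d → ℤ => B.mulVec fun i => (x i : ℝ)) ''
        (Set.Icc (fun i => -⌈∑ j, |B⁻¹ i j| * R⌉) (fun i => ⌈∑ j, |B⁻¹ i j| * R⌉)) := by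
    rintro z ⟨⟨x, rfl⟩, hz⟩
    refine ⟨x, ?_, rfl⟩
    have hx : ∀ i, |(x i : ℝ)| ≤ ∑ j, |B⁻¹ i j| * R := by
      intro i
      have h1 : (x i : ℝ) = B⁻¹.mulVec (B.mulVec fun i => (x i : ℝ)) i := by
        rw [Matrix.mulVec_mulVec, Matrix.nonsing_inv_mul _ hu, Matrix.one_mulVec]
      rw [h1, Matrix.mulVec, dotProduct]
      refine (Finset.abs_sum_le_sum_abs _ _).trans (Finset.sum_le_sum fun j _ => ?_)
      rw [abs_mul]
      exact mul_le_mul_of_nonneg_left (hz j) (abs_nonneg _)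
    have hx2 : ∀ i, |(x i : ℝ)| ≤ ((⌈∑ j, |B⁻¹ i j| * R⌉ : ℤ) : ℝ) :=
      fun i => (hx i).trans (Int.le_ceil _)
    constructor
    · intro i
      have := (abs_le.1 (hx2 i)).1
      exact_mod_cast this
    · intro i
      have := (abs_le.1 (hx2 i)).2
      exact_mod_cast this
  exact ((Set.finite_Icc _ _).image _).subset hsub

lemma dual_latOf {d : ℕ} (B : Matrix (Fin d) (Fin d) ℝ) (hB : |B.det| = 1) :
    dualLattice d (latOf B) = latOf (B⁻¹.transpose) := by
  classical
  have hu : IsUnit B.det := by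
    rw [isUnit_iff_ne_zero]; intro h; rw [h] at hB; simp at hB
  ext w
  constructor
  · intro hw
    have h1 : ∀ j, ∃ c : ℤ, (B.transpose.mulVec w) j = (c : ℝ) := by
      intro j
      obtain ⟨c, hc⟩ := hw (B.mulVec fun i => ((Pi.single j 1 : Fin d → ℤ) i : ℝ)) ⟨_, rfl⟩
      refine ⟨c, ?_⟩
      rw [← hc]
      simp [Matrix.mulVec, dotProduct, Pi.single_apply, mul_comm]
    choose y hy using h1
    refine ⟨y, ?_⟩
    have : (fun i => (y i : ℝ)) = B.transpose.mulVec w := by ext i; rw [hy]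
    rw [this, Matrix.mulVec_mulVec, ← Matrix.transpose_mul, Matrix.mul_nonsing_inv _ hu]
    simp
  · rintro ⟨y, rfl⟩ z ⟨x, rfl⟩
    refine ⟨∑ i, y i * x i, ?_⟩
    change (B⁻¹.transpose.mulVec fun i => (y i : ℝ)) ⬝ᵥ (B.mulVec fun i => (x i : ℝ)) = _
    rw [Matrix.dotProduct_mulVec, Matrix.mulVec_transpose, Matrix.vecMul_vecMul,
      Matrix.nonsing_inv_mul _ hu, Matrix.vecMul_one]
    simp [dotProduct]

lemma det_dual {d : ℕ} (B : Matrix (Fin d) (Fin d) ℝ) (hB : |B.det| = 1) :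
    |(B⁻¹.transpose).det| = 1 := by
  rw [Matrix.det_transpose, Matrix.det_nonsing_inv, Ring.inverse_eq_inv', abs_inv, hB, inv_one]

lemma dual_dual {d : ℕ} (B : Matrix (Fin d) (Fin d) ℝ) (hB : |B.det| = 1) :
    dualLattice d (dualLattice d (latOf B)) = latOf B := by
  have hu : IsUnit B.det := by
    rw [isUnit_iff_ne_zero]; intro h; rw [h] at hB; simp at hB
  rw [dual_latOf B hB, dual_latOf _ (det_dual B hB), Matrix.transpose_nonsing_inv,
    Matrix.transpose_transpose, Matrix.nonsing_inv_nonsing_inv _ hu]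

lemma orth_point {d : ℕ} (B : Matrix (Fin d) (Fin d) ℝ) (hB : |B.det| = 1)
    (w : Fin d → ℝ) (hw : w ∈ dualLattice d (latOf B)) (k : Fin d) (hk : w k ≠ 0)
    (c : Fin d → ℝ) (hc : ∀ i, 0 < c i) (hck : c k = 1) (h : |w k| < ∏ i, c i) :
    ∃ z ∈ latOf B, z ≠ 0 ∧ (∀ i, i ≠ k → |z i| < c i) ∧ ∑ i, w i * z i = 0 := by
  have hdet : (B.updateRow k (∑ j, w j • B j)).det = w k * B.det := by
    rw [Matrix.det_updateRow_sum, smul_eq_mul]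
  have hB0 : B.det ≠ 0 := by intro h; rw [h] at hB; simp at hB
  obtain ⟨x, hx0, hx⟩ := minkowski_forms (B.updateRow k (∑ j, w j • B j))
    (by rw [hdet]; exact mul_ne_zero hk hB0) c hc (by rw [hdet, abs_mul, hB, mul_one]; exact h)
  refine ⟨_, ⟨x, rfl⟩, latOf_ne_zero B hB x hx0, ?_, ?_⟩
  · intro i hi
    have := hx i
    rwa [Matrix.mulVec, Matrix.updateRow_ne hi] at this
  · obtain ⟨m, hm⟩ := hw _ ⟨x, rfl⟩
    have h1 := hx k
    rw [Matrix.mulVec, Matrix.updateRow_self, hck] at h1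
    have h2 : (∑ j, w j • B j) ⬝ᵥ (fun i => (x i : ℝ)) =
        ∑ i, w i * (B.mulVec fun i => (x i : ℝ)) i := by
      rw [sum_dotProduct]
      simp [Matrix.mulVec, smul_dotProduct]
    rw [h2, hm] at h1
    rw [hm]
    have : |m| < 1 := by exact_mod_cast h1
    rw [Int.abs_lt_one_iff.1 this]; simp

lemma le_supNorm {d : ℕ} (z : Fin d → ℝ) (i : Fin d) : |z i| ≤ supNorm z :=
  le_ciSup (f := fun i => |z i|) (Set.finite_range _).bddAbove i

lemma supNorm_pos {d : ℕ} (z : Fin d → ℝ) (hz : z ≠ 0) : 0 < supNorm z := by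
  obtain ⟨i, hi⟩ := Function.ne_iff.1 hz
  exact (abs_pos.2 hi).trans_le (le_supNorm z i)

lemma PiProd_eq {d : ℕ} (z : Fin d → ℝ) : PiProd d z = (∏ i, |z i|) ^ ((1 : ℝ) / d) :=
  Real.finsetProd_rpow _ _ (fun _ _ => abs_nonneg _) _

lemma PiProd_zero {d : ℕ} (hd : 2 ≤ d) (z : Fin d → ℝ) (i : Fin d) (hi : z i = 0) :
    PiProd d z = 0 := by
  rw [PiProd_eq, Finset.prod_eq_zero (Finset.mem_univ i) (by simp [hi]), Real.zero_rpow]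
  have : (d : ℝ) ≠ 0 := by positivity
  positivity

lemma infinite_of_small {d : ℕ} (hd : 2 ≤ d) (B : Matrix (Fin d) (Fin d) ℝ) (hB : |B.det| = 1)
    (γ R : ℝ) (h : ∀ ε : ℝ, 0 < ε → ∃ z ∈ latOf B, z ≠ 0 ∧ (∃ i, |z i| < ε) ∧
      (R < supNorm z → PiProd d z ≤ supNorm z ^ (-γ))) :
    {z ∈ latOf B | PiProd d z ≤ supNorm z ^ (-γ)}.Infinite := by
  have : Nonempty (Fin d) := ⟨⟨0, by omega⟩⟩
  by_cases h0 : ∃ z ∈ latOf B, z ≠ 0 ∧ ∃ i, z i = 0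
  · obtain ⟨z, ⟨x, hx⟩, hz, i, hi⟩ := h0
    refine Set.infinite_of_injective_forall_mem (f := fun n : ℕ => (n : ℝ) • z) ?_ ?_
    · intro a b hab
      have := smul_left_injective ℝ hz hab
      exact_mod_cast this
    · intro n
      refine ⟨⟨fun i => n * x i, ?_⟩, ?_⟩
      · simp only [hx]
        rw [← Matrix.mulVec_smul]
        congr 1
        ext i
        simp
      · rw [PiProd_zero hd _ i (by simp [hi])]
        exact Real.rpow_nonneg ((abs_nonneg _).trans (le_supNorm _ i)) _
  · push Not at h0
    intro hfin
    have hT := hfin.union (latOf_finite B hB R)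
    set T := {z ∈ latOf B | PiProd d z ≤ supNorm z ^ (-γ)} ∪ {z ∈ latOf B | ∀ i, |z i| ≤ R}
    have hex : ∃ ε > 0, ∀ z ∈ T, z ≠ 0 → ∀ i, ε ≤ |z i| := by
      have hf : ((fun p : (Fin d → ℝ) × Fin d => |p.1 p.2|) '' ((T \ {0}) ×ˢ Set.univ)).Finite :=
        ((hT.subset Set.sdiff_subset).prod Set.finite_univ).image _
      have hpos : ∀ y ∈ ((fun p : (Fin d → ℝ) × Fin d => |p.1 p.2|) ''
          ((T \ {0}) ×ˢ Set.univ)), 0 < y := by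
        rintro _ ⟨⟨z, i⟩, ⟨⟨hz, hz0⟩, -⟩, rfl⟩
        refine abs_pos.2 (h0 z ?_ hz0 i)
        rcases hz with hz | hz <;> exact hz.1
      rcases Set.eq_empty_or_nonempty ((fun p : (Fin d → ℝ) × Fin d => |p.1 p.2|) ''
          ((T \ {0}) ×ˢ Set.univ)) with he | hne
      · refine ⟨1, one_pos, fun z hz hz0 i => ?_⟩
        have : |z i| ∈ ((fun p : (Fin d → ℝ) × Fin d => |p.1 p.2|) ''
          ((T \ {0}) ×ˢ Set.univ)) := ⟨(z, i), ⟨⟨hz, hz0⟩, trivial⟩, rfl⟩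
        rw [he] at this
        exact this.elim
      · obtain ⟨y, hy, hmin⟩ := Set.exists_min_image _ id hf hne
        exact ⟨y, hpos y hy, fun z hz hz0 i => hmin _ ⟨(z, i), ⟨⟨hz, hz0⟩, trivial⟩, rfl⟩⟩
    obtain ⟨ε, hε, hT2⟩ := hex
    obtain ⟨z, hz, hz0, ⟨i, hi⟩, hR⟩ := h ε hε
    refine absurd (hT2 z ?_ hz0 i) (not_le.2 hi)
    rcases lt_or_ge R (supNorm z) with h1 | h1
    · exact Or.inl ⟨hz, hR h1⟩
    · exact Or.inr ⟨hz, fun j => (le_supNorm z j).trans h1⟩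

lemma le_omega {d : ℕ} (Λ : Set (Fin d → ℝ)) (γ : ℝ)
    (h : {z ∈ Λ | PiProd d z ≤ supNorm z ^ (-γ)}.Infinite) : (γ : EReal) ≤ omegaLat d Λ :=
  le_sSup ⟨γ, h, rfl⟩

/-- Minkowski: the exponent is nonnegative. -/
lemma omega_nonneg {d : ℕ} (hd : 2 ≤ d) (B : Matrix (Fin d) (Fin d) ℝ) (hB : |B.det| = 1) :
    0 ≤ omegaLat d (latOf B) := by
  refine EReal.ge_of_forall_gt_iff_ge.1 fun x hx => ?_
  have hx : x < 0 := by exact_mod_cast hx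
  apply le_omega
  refine infinite_of_small hd B hB x (2 ^ (-x)⁻¹) fun ε hε => ?_
  have hk : ∃ k : Fin d, True := ⟨⟨0, by omega⟩, trivial⟩
  obtain ⟨k, -⟩ := hk
  obtain ⟨N, hN⟩ := exists_nat_gt (2 / ε)
  have hNpos : (0 : ℝ) < N := lt_trans (by positivity) hN
  have hN1 : (1 : ℝ) ≤ N := by
    have : 0 < N := by exact_mod_cast hNpos
    exact_mod_cast this
  have hprod : ∏ i, ((N : ℝ) * (if i = k then 2 / (N : ℝ) ^ d else 1)) = 2 := by
    rw [Finset.prod_mul_distrib, Finset.prod_ite_eq' Finset.univ k]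
    simp
    field_simp
  have hB0 : B.det ≠ 0 := by intro h; rw [h] at hB; simp at hB
  have hcpos : ∀ i : Fin d, 0 < ((N : ℝ) * (if i = k then 2 / (N : ℝ) ^ d else 1)) := by
    intro i; split_ifs <;> positivity
  obtain ⟨y, hy0, hy⟩ := minkowski_forms B hB0
    (fun i => (N : ℝ) * (if i = k then 2 / (N : ℝ) ^ d else 1)) hcpos
    (by rw [hB, hprod]; norm_num)
  refine ⟨_, ⟨y, rfl⟩, latOf_ne_zero B hB y hy0, ⟨k, (hy k).trans ?_⟩, fun hR => ?_⟩
  · simp only [if_true]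
    have h1 : (N : ℝ) ^ 2 ≤ N ^ d := pow_le_pow_right₀ hN1 hd
    rw [div_lt_iff₀ hε] at hN
    rw [← mul_div_assoc, div_lt_iff₀ (by positivity)]
    nlinarith
  · have h1 : PiProd d (B.mulVec fun i => (y i : ℝ)) ≤ 2 := by
      rw [PiProd_eq]
      have h2 : ∏ i, |(B.mulVec fun i => (y i : ℝ)) i| ≤ 2 := by
        rw [← hprod]
        exact Finset.prod_le_prod (fun _ _ => abs_nonneg _) (fun i _ => (hy i).le)
      calc _ ≤ (2 : ℝ) ^ ((1 : ℝ) / d) :=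
            Real.rpow_le_rpow (Finset.prod_nonneg fun _ _ => abs_nonneg _) h2 (by positivity)
        _ ≤ 2 ^ (1 : ℝ) := by
            apply Real.rpow_le_rpow_of_exponent_le (by norm_num)
            rw [div_le_one (by positivity)]
            exact_mod_cast (by omega : 1 ≤ d)
        _ = 2 := by simp
    refine h1.trans ?_
    calc (2 : ℝ) = ((2 : ℝ) ^ (-x)⁻¹) ^ (-x) := by
          rw [← Real.rpow_mul (by norm_num), inv_mul_cancel₀ (by linarith), Real.rpow_one]
      _ ≤ _ := Real.rpow_le_rpow (by positivity) hR.le (by linarith)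

lemma exists_lambda {d : ℕ} (w : Fin d → ℝ) (k : Fin d) (hk : ∀ i, |w i| ≤ |w k|)
    (hM : 1 ≤ |w k|) (P : ℝ) (hP0 : 0 < P) (hP1 : P ≤ 1) (hprod : ∏ i, |w i| ≤ P) :
    ∃ l : Fin d → ℝ, (∀ i, 0 < l i) ∧ (∀ i, |w i| ≤ l i) ∧ (∀ i, l i ≤ |w k|) ∧
      l k = |w k| ∧ ∏ i, l i = P := by
  have hcont : ContinuousOn (fun t : ℝ => ∏ i, max (|w i|) t) (Set.Icc 0 |w k|) := by
    apply Continuous.continuousOn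
    fun_prop
  have hmem : P ∈ Set.Icc (∏ i, max (|w i|) 0) (∏ i, max (|w i|) |w k|) := by
    constructor
    · simpa using hprod
    · simp only [max_eq_right (hk _)]
      simp only [Finset.prod_const]
      exact hP1.trans (one_le_pow₀ hM)
  obtain ⟨t, ht, hPt⟩ := intermediate_value_Icc (abs_nonneg _) hcont hmem
  simp only at hPt
  refine ⟨fun i => max (|w i|) t, fun i => ?_, fun i => le_max_left _ _,
    fun i => max_le (hk i) ht.2, max_eq_left ht.2, hPt⟩
  refine lt_of_le_of_ne (le_max_of_le_left (abs_nonneg _)) fun h => ?_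
  rw [Finset.prod_eq_zero (Finset.mem_univ i) h.symm] at hPt
  exact hP0.ne hPt

lemma transfer {d : ℕ} (hd : 2 ≤ d) (B : Matrix (Fin d) (Fin d) ℝ) (hB : |B.det| = 1)
    (w : Fin d → ℝ) (hw : w ∈ dualLattice d (latOf B)) (k : Fin d) (hk : ∀ i, |w i| ≤ |w k|)
    (hM : 1 ≤ |w k|) (P : ℝ) (hP0 : 0 < P) (hP1 : P ≤ 1) (hprod : ∏ i, |w i| ≤ P)
    (s : ℝ) (hs : 0 < s) (hsP : s ^ (d - 1) = 2 * P) :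
    ∃ z ∈ latOf B, z ≠ 0 ∧ |z k| ≤ d * s / |w k| ∧
      (∀ i, |z i| ≤ d * s * |w k| ^ (d - 1) / P) ∧ ∏ i, |z i| ≤ 2 * d * s := by
  obtain ⟨l, hl0, hwl, hlM, hlk, hlP⟩ := exists_lambda w k hk hM P hP0 hP1 hprod
  have hMpos : 0 < |w k| := by linarith
  have hsd : s ^ d = 2 * P * s := by
    rw [← hsP, ← pow_succ]; congr 1; omega
  have hprodc : ∏ i, (s / l i * (if i = k then |w k| / s else 1)) = 2 * |w k| := by
    rw [Finset.prod_mul_distrib, Finset.prod_ite_eq' Finset.univ k, Finset.prod_div_distrib, hlP]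
    simp [hsd]
    field_simp
  obtain ⟨z, hz, hz0, hzc, horth⟩ := orth_point B hB w hw k (abs_pos.1 hMpos)
    (fun i => s / l i * (if i = k then |w k| / s else 1))
    (by intro i; have := hl0 i; split_ifs <;> positivity)
    (by simp [hlk]; field_simp) (by rw [hprodc]; linarith)
  have hzi : ∀ i, i ≠ k → |z i| ≤ s / l i := by
    intro i hi
    have := hzc i hi
    simp only [if_neg hi, mul_one] at this
    exact this.le
  have hd1 : (1 : ℝ) ≤ d := by exact_mod_cast (by omega : 1 ≤ d)
  have hzk : |z k| ≤ d * (s / l k) := by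
    have h1 : w k * z k = - ∑ i ∈ Finset.univ.erase k, w i * z i := by
      rw [← Finset.add_sum_erase _ _ (Finset.mem_univ k)] at horth
      linarith
    have h2 : |w k| * |z k| ≤ d * s := by
      rw [← abs_mul, h1, abs_neg]
      calc _ ≤ ∑ i ∈ Finset.univ.erase k, |w i * z i| := Finset.abs_sum_le_sum_abs _ _
        _ ≤ ∑ i ∈ Finset.univ.erase k, s := by
            refine Finset.sum_le_sum fun i hi => ?_
            rw [abs_mul]
            have hne : i ≠ k := Finset.ne_of_mem_erase hi
            calc |w i| * |z i| ≤ l i * (s / l i) :=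
                  mul_le_mul (hwl i) (hzi i hne) (abs_nonneg _) (hl0 i).le
              _ = s := by have := hl0 i; field_simp
        _ ≤ ∑ i : Fin d, s :=
            Finset.sum_le_sum_of_subset_of_nonneg (Finset.erase_subset _ _) (fun _ _ _ => hs.le)
        _ = d * s := by simp
    rw [hlk, ← mul_div_assoc, le_div_iff₀ hMpos]
    linarith
  refine ⟨z, hz, hz0, ?_, ?_, ?_⟩
  · rw [mul_div_assoc, ← hlk]; exact hzk
  · intro i
    have h1 : |z i| ≤ d * (s / l i) := by
      by_cases hi : i = k
      · rw [hi]; exact hzk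
      · have h3 : 0 ≤ s / l i := (div_pos hs (hl0 i)).le
        nlinarith [hzi i hi]
    have h2 : P ≤ l i * |w k| ^ (d - 1) := by
      rw [← hlP, ← Finset.mul_prod_erase _ _ (Finset.mem_univ i)]
      refine mul_le_mul_of_nonneg_left ?_ (hl0 i).le
      calc _ ≤ ∏ j ∈ Finset.univ.erase i, |w k| :=
            Finset.prod_le_prod (fun j _ => (hl0 j).le) (fun j _ => hlM j)
        _ = _ := by simp [Finset.card_erase_of_mem]
    refine h1.trans ?_
    have := hl0 i
    rw [← mul_div_assoc, div_le_div_iff₀ this hP0]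
    have h4 : 0 ≤ d * s := by positivity
    nlinarith [mul_le_mul_of_nonneg_left h2 h4]
  · calc ∏ i, |z i| ≤ ∏ i, ((s / l i) * (if i = k then (d : ℝ) else 1)) := by
          refine Finset.prod_le_prod (fun _ _ => abs_nonneg _) (fun i _ => ?_)
          split_ifs with hi
          · rw [hi, mul_comm]; exact hzk
          · rw [mul_one]; exact hzi i hi
      _ = 2 * d * s := by
          rw [Finset.prod_mul_distrib, Finset.prod_ite_eq' Finset.univ k, Finset.prod_div_distrib,
            hlP]
          simp [hsd]
          field_simp

lemma main_infinite {d : ℕ} (hd : 2 ≤ d) (B : Matrix (Fin d) (Fin d) ℝ) (hB : |B.det| = 1)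
    (γ δ : ℝ) (hγ : 0 < γ) (hδ : 0 < δ) (hlt : δ * (((d : ℝ) - 1) ^ 2 * (1 + γ) - γ) < γ)
    (h : {z ∈ dualLattice d (latOf B) | PiProd d z ≤ supNorm z ^ (-γ)}.Infinite) :
    {z ∈ latOf B | PiProd d z ≤ supNorm z ^ (-δ)}.Infinite := by
  have hne : Nonempty (Fin d) := ⟨⟨0, by omega⟩⟩
  have hd2 : (2 : ℝ) ≤ d := by exact_mod_cast hd
  have hd0 : (0 : ℝ) < d := by linarith
  have hd1 : (0 : ℝ) < (d : ℝ) - 1 := by linarith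
  have hcast : ((d - 1 : ℕ) : ℝ) = (d : ℝ) - 1 := by
    rw [Nat.cast_sub (by omega)]; simp
  set E : ℝ := -(γ * d / ((d : ℝ) - 1)) + ((d : ℝ) - 1) + γ * d with hE
  have hE2 : E * ((d : ℝ) - 1) = ((d : ℝ) - 1) ^ 2 * (1 + γ) - γ := by
    rw [hE]; field_simp; ring
  set η : ℝ := γ / ((d : ℝ) - 1) - E * δ with hη
  have hηpos : 0 < η := by
    rw [hη, sub_pos, lt_div_iff₀ hd1, mul_right_comm, hE2, mul_comm]; exact hlt
  refine infinite_of_small hd B hB δ 0 fun ε hε => ?_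
  -- choose `w` with large norm
  have hev : ∀ᶠ x : ℝ in atTop, 4 * d * (2 * d) ^ δ ≤ x ^ η :=
    (tendsto_rpow_atTop hηpos).eventually_ge_atTop _
  obtain ⟨R, hR⟩ := (hev.and ((eventually_ge_atTop (1 : ℝ)).and
    (eventually_gt_atTop (2 * d / ε)))).exists_forall_of_atTop
  have hw : ∃ w ∈ dualLattice d (latOf B), PiProd d w ≤ supNorm w ^ (-γ) ∧ R ≤ supNorm w := by
    by_contra hcon
    push Not at hcon
    apply h
    have hfin := latOf_finite _ (det_dual B hB) R
    rw [← dual_latOf B hB] at hfin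
    exact hfin.subset fun w hw => ⟨hw.1, fun i => (le_supNorm w i).trans (hcon w hw.1 hw.2).le⟩
  obtain ⟨w, hwd, hwP, hwR⟩ := hw
  obtain ⟨k, hk⟩ := exists_eq_ciSup_of_finite (f := fun i => |w i|)
  change |w k| = supNorm w at hk
  obtain ⟨hM1, hM2, hM3⟩ := hR _ hwR
  rw [← hk] at hM1 hM2 hM3 hwP
  have hkle : ∀ i, |w i| ≤ |w k| := fun i => by rw [hk]; exact le_supNorm w i
  set M := |w k| with hMdef
  have hM0 : 0 < M := by linarith
  have hprod : ∏ i, |w i| ≤ M ^ (-(γ * d)) := by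
    have h0 : 0 ≤ ∏ i, |w i| := Finset.prod_nonneg fun _ _ => abs_nonneg _
    rw [PiProd_eq] at hwP
    have := Real.rpow_le_rpow (Real.rpow_nonneg h0 _) hwP hd0.le
    rwa [← Real.rpow_mul h0, ← Real.rpow_mul hM0.le, one_div, inv_mul_cancel₀ hd0.ne',
      Real.rpow_one, neg_mul] at this
  have hP0 : 0 < M ^ (-(γ * d)) := Real.rpow_pos_of_pos hM0 _
  have hP1 : M ^ (-(γ * d)) ≤ 1 :=
    Real.rpow_le_one_of_one_le_of_nonpos hM2 (by have := mul_pos hγ hd0; linarith)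
  set s : ℝ := (2 * M ^ (-(γ * d))) ^ (((d - 1 : ℕ) : ℝ)⁻¹) with hs
  have hs0 : 0 < s := Real.rpow_pos_of_pos (by positivity) _
  have hsP : s ^ (d - 1) = 2 * M ^ (-(γ * d)) :=
    Real.rpow_inv_natCast_pow (by positivity) (by omega)
  have hsle : s ≤ 2 * M ^ (-(γ * d / ((d : ℝ) - 1))) := by
    rw [hs, Real.mul_rpow (by norm_num) hP0.le, ← Real.rpow_mul hM0.le, hcast,
      neg_mul, ← div_eq_mul_inv]
    refine mul_le_mul_of_nonneg_right ?_ (Real.rpow_nonneg hM0.le _)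
    calc (2 : ℝ) ^ (((d : ℝ) - 1)⁻¹) ≤ 2 ^ (1 : ℝ) := by
          apply Real.rpow_le_rpow_of_exponent_le (by norm_num)
          apply inv_le_one_of_one_le₀; linarith
      _ = 2 := by simp
  obtain ⟨z, hz, hz0, hzk, hzi, hzp⟩ := transfer hd B hB w hwd k hkle hM2 _ hP0 hP1 hprod s hs0 hsP
  rw [← hMdef] at hzk hzi
  refine ⟨z, hz, hz0, ⟨k, hzk.trans_lt ?_⟩, fun _ => ?_⟩
  · have hs2 : s ≤ 2 := by
      refine hsle.trans ?_
      have : M ^ (-(γ * d / ((d : ℝ) - 1))) ≤ 1 :=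
        Real.rpow_le_one_of_one_le_of_nonpos hM2 (by
          have : 0 < γ * d / ((d : ℝ) - 1) := by positivity
          linarith)
      linarith
    rw [div_lt_iff₀ hε] at hM3
    rw [div_lt_iff₀ hM0]
    nlinarith
  · have hPi : PiProd d z ≤ 4 * d * M ^ (-(γ / ((d : ℝ) - 1))) := by
      rw [PiProd_eq]
      have h1 : ∏ i, |z i| ≤ (4 * d) * M ^ (-(γ * d / ((d : ℝ) - 1))) := by
        refine hzp.trans ?_
        nlinarith
      calc _ ≤ ((4 * d) * M ^ (-(γ * d / ((d : ℝ) - 1)))) ^ ((1 : ℝ) / d) :=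
            Real.rpow_le_rpow (Finset.prod_nonneg fun _ _ => abs_nonneg _) h1 (by positivity)
        _ = (4 * d : ℝ) ^ ((1 : ℝ) / d) * M ^ (-(γ / ((d : ℝ) - 1))) := by
            rw [Real.mul_rpow (by positivity) (Real.rpow_nonneg hM0.le _), ← Real.rpow_mul hM0.le]
            congr 2
            field_simp
        _ ≤ _ := by
            refine mul_le_mul_of_nonneg_right ?_ (Real.rpow_nonneg hM0.le _)
            calc (4 * d : ℝ) ^ ((1 : ℝ) / d) ≤ (4 * d : ℝ) ^ (1 : ℝ) := by
                  apply Real.rpow_le_rpow_of_exponent_le (by linarith)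
                  rw [div_le_one hd0]; linarith
              _ = _ := Real.rpow_one _
    have hsup : supNorm z ≤ 2 * d * M ^ E := by
      refine ciSup_le fun i => (hzi i).trans ?_
      have h1 : M ^ E = M ^ (-(γ * d / ((d : ℝ) - 1))) * M ^ (d - 1) / M ^ (-(γ * d)) := by
        rw [hE, Real.rpow_add hM0, Real.rpow_add hM0, ← hcast, Real.rpow_natCast,
          Real.rpow_neg hM0.le (γ * d), div_inv_eq_mul]
      rw [h1, ← mul_div_assoc]
      refine div_le_div_of_nonneg_right ?_ hP0.le
      have h2 : 0 ≤ d * M ^ (d - 1) := by positivity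
      nlinarith [mul_le_mul_of_nonneg_left hsle h2]
    calc PiProd d z ≤ 4 * d * M ^ (-(γ / ((d : ℝ) - 1))) := hPi
      _ ≤ (2 * d * M ^ E) ^ (-δ) := by
          rw [Real.mul_rpow (by positivity) (Real.rpow_nonneg hM0.le _), ← Real.rpow_mul hM0.le,
            Real.rpow_neg (by positivity : (0 : ℝ) ≤ 2 * d), inv_mul_eq_div,
            le_div_iff₀ (by positivity)]
          have h3 : M ^ (E * -δ) = M ^ η * M ^ (-(γ / ((d : ℝ) - 1))) := by
            rw [← Real.rpow_add hM0]; congr 1; rw [hη]; ring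
          rw [h3]
          have := mul_le_mul_of_nonneg_right hM1
            (Real.rpow_nonneg hM0.le (-(γ / ((d : ℝ) - 1))))
          linarith
      _ ≤ supNorm z ^ (-δ) :=
          Real.rpow_le_rpow_of_nonpos (supNorm_pos z hz0) hsup (by linarith)

lemma denom_pos {d : ℕ} (hd : 2 ≤ d) (γ : ℝ) (hγ : 0 < γ) :
    0 < ((d : ℝ) - 1) ^ 2 * (1 + γ) - γ := by
  have hd2 : (2 : ℝ) ≤ d := by exact_mod_cast hd
  have : (1 : ℝ) ≤ ((d : ℝ) - 1) ^ 2 := by nlinarith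
  nlinarith

lemma main_ineq {d : ℕ} (hd : 2 ≤ d) (B : Matrix (Fin d) (Fin d) ℝ) (hB : |B.det| = 1)
    (γ : ℝ) (hγ : 0 < γ) (h : (γ : EReal) ≤ omegaLat d (dualLattice d (latOf B))) :
    ((γ / (((d : ℝ) - 1) ^ 2 * (1 + γ) - γ) : ℝ) : EReal) ≤ omegaLat d (latOf B) := by
  refine EReal.ge_of_forall_gt_iff_ge.1 fun x hx => ?_
  have hx : x < γ / (((d : ℝ) - 1) ^ 2 * (1 + γ) - γ) := by exact_mod_cast hx
  rcases le_or_gt x 0 with hx0 | hx0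
  · exact le_trans (by exact_mod_cast hx0) (omega_nonneg hd B hB)
  rw [lt_div_iff₀ (denom_pos hd γ hγ)] at hx
  have hd2 : (2 : ℝ) ≤ d := by exact_mod_cast hd
  have hD : (1 : ℝ) ≤ ((d : ℝ) - 1) ^ 2 := by nlinarith
  set D := ((d : ℝ) - 1) ^ 2 with hDdef
  have hq : 0 < 1 - x * (D - 1) := by
    by_contra hcon
    push Not at hcon
    nlinarith [mul_pos hx0 (by linarith : 0 < D)]
  have hγ0 : x * D / (1 - x * (D - 1)) < γ := by
    rw [div_lt_iff₀ hq]; nlinarith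
  have hlt : ((x * D / (1 - x * (D - 1)) : ℝ) : EReal) <
      omegaLat d (dualLattice d (latOf B)) := lt_of_lt_of_le (by exact_mod_cast hγ0) h
  obtain ⟨_, ⟨g, hg, rfl⟩, hlg⟩ := lt_sSup_iff.1 hlt
  have hlg : x * D / (1 - x * (D - 1)) < g := by exact_mod_cast hlg
  have hgpos : 0 < g := lt_trans (by positivity) hlg
  apply le_omega
  refine main_infinite hd B hB g x hgpos hx0 ?_ hg
  rw [div_lt_iff₀ hq] at hlg
  rw [← hDdef]
  nlinarith

theorem stmt1 (d : ℕ) (hd : 2 ≤ d) (Λ : Set (Fin d → ℝ))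
    (hΛ : IsUnimodularLattice d Λ) :
    (omegaLat d Λ = 0 ↔ omegaLat d (dualLattice d Λ) = 0) ∧
    (∀ γ : ℝ, 0 < γ → (γ : EReal) ≤ omegaLat d (dualLattice d Λ) →
      ((γ / (((d : ℝ) - 1) ^ 2 * (1 + γ) - γ) : ℝ) : EReal) ≤ omegaLat d Λ) ∧
    (∀ a b : ℝ, omegaLat d Λ = (a : EReal) → omegaLat d (dualLattice d Λ) = (b : EReal) →
      a ≠ 0 → b ≠ 0 → 1 + a⁻¹ ≤ ((d : ℝ) - 1) ^ 2 * (1 + b⁻¹)) := by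
  obtain ⟨B, hB, rfl⟩ := hΛ
  change (omegaLat d (latOf B) = 0 ↔ omegaLat d (dualLattice d (latOf B)) = 0) ∧
    (∀ γ : ℝ, 0 < γ → (γ : EReal) ≤ omegaLat d (dualLattice d (latOf B)) →
      ((γ / (((d : ℝ) - 1) ^ 2 * (1 + γ) - γ) : ℝ) : EReal) ≤ omegaLat d (latOf B)) ∧
    (∀ a b : ℝ, omegaLat d (latOf B) = (a : EReal) →
      omegaLat d (dualLattice d (latOf B)) = (b : EReal) →
      a ≠ 0 → b ≠ 0 → 1 + a⁻¹ ≤ ((d : ℝ) - 1) ^ 2 * (1 + b⁻¹))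
  have key : ∀ A : Matrix (Fin d) (Fin d) ℝ, |A.det| = 1 → omegaLat d (latOf A) = 0 →
      omegaLat d (dualLattice d (latOf A)) = 0 := by
    intro A hA h0
    refine le_antisymm ?_ (by rw [dual_latOf A hA]; exact omega_nonneg hd _ (det_dual A hA))
    by_contra hcon
    push Not at hcon
    obtain ⟨g, hg0, hg⟩ := EReal.lt_iff_exists_real_btwn.1 hcon
    have hg0 : 0 < g := by exact_mod_cast hg0
    have h1 := main_ineq hd A hA g hg0 hg.le
    rw [h0] at h1
    have h2 : g / (((d : ℝ) - 1) ^ 2 * (1 + g) - g) ≤ 0 := by exact_mod_cast h1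
    exact absurd h2 (not_le.2 (div_pos hg0 (denom_pos hd g hg0)))
  refine ⟨⟨key B hB, fun h => ?_⟩, main_ineq hd B hB, ?_⟩
  · have h1 := key _ (det_dual B hB) (by rw [← dual_latOf B hB]; exact h)
    rwa [← dual_latOf B hB, dual_dual B hB] at h1
  · intro a b ha hb ha0 hb0
    have hapos : 0 < a := by
      have h1 := omega_nonneg hd B hB
      rw [ha] at h1
      exact lt_of_le_of_ne (by exact_mod_cast h1) ha0.symm
    have hbpos : 0 < b := by
      have h1 := omega_nonneg hd _ (det_dual B hB)
      rw [← dual_latOf B hB, hb] at h1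
      exact lt_of_le_of_ne (by exact_mod_cast h1) hb0.symm
    have h1 := main_ineq hd B hB b hbpos hb.ge
    rw [ha] at h1
    have h2 : b / (((d : ℝ) - 1) ^ 2 * (1 + b) - b) ≤ a := by exact_mod_cast h1
    rw [div_le_iff₀ (denom_pos hd b hbpos)] at h2
    have h3 : ((d : ℝ) - 1) ^ 2 * (1 + b⁻¹) - (1 + a⁻¹) =
        (a * (((d : ℝ) - 1) ^ 2 * (1 + b) - b) - b) / (a * b) := by
      field_simp
      ring
    have h4 : 0 ≤ (a * (((d : ℝ) - 1) ^ 2 * (1 + b) - b) - b) / (a * b) :=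
      div_nonneg (by linarith) (by positivity)
    linarith
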